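/- Let M be the category of finitely presented left P_k(Ē)-modules M with L_k(E) ⊗_{P_k(Ē)} M = 0. Then every object of M is finite-dimensional over k, and M is a Serre subcategory of the category fpl(P_k(Ē)) of finitely presented left P_k(Ē)-modules of finite length. Moreover, the induced homomorphism K_0(M) → K_0(fpl(P_k(Ē))) is injective and its image is the subgroup generated by the classes of the simple modules belonging to M. -/

import Mathlib

namespace LPA

/-- A finite quiver: finite sets of vertices and arrows with source and target maps. -/
structure FinQuiver : Type 1 where
  V : Type
  A : Type
  [fintypeV : Fintype V]
  [decEqV : DecidableEq V]
  [fintypeA : Fintype A]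
  [decEqA : DecidableEq A]
  src : A → V
  tgt : A → V

attribute [instance] FinQuiver.fintypeV FinQuiver.decEqV FinQuiver.fintypeA FinQuiver.decEqA

/-- The inverse quiver: all arrows reversed. -/
def FinQuiver.rev (Q : FinQuiver) : FinQuiver where
  V := Q.V
  A := Q.A
  fintypeV := Q.fintypeV
  decEqV := Q.decEqV
  fintypeA := Q.fintypeA
  decEqA := Q.decEqA
  src := Q.tgt
  tgt := Q.src

/-- Generators of the path algebra: a trivial path `p v` for each vertex and an arrow `e` for
each arrow. -/
inductive PathGen (Q : FinQuiver) : Type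
  | vertex (v : Q.V) : PathGen Q
  | edge (e : Q.A) : PathGen Q

/-- Defining relations of the path algebra: the trivial paths are pairwise orthogonal
idempotents summing to `1`, and `p (src e) * e = e = e * p (tgt e)`. -/
inductive PathRel (k : Type) [CommRing k] (Q : FinQuiver) :
    FreeAlgebra k (PathGen Q) → FreeAlgebra k (PathGen Q) → Prop
  | vertex_mul_self (v : Q.V) :
      PathRel k Q (FreeAlgebra.ι k (PathGen.vertex v) * FreeAlgebra.ι k (PathGen.vertex v))
        (FreeAlgebra.ι k (PathGen.vertex v))
  | vertex_mul_ne (v w : Q.V) (h : v ≠ w) :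
      PathRel k Q (FreeAlgebra.ι k (PathGen.vertex v) * FreeAlgebra.ι k (PathGen.vertex w)) 0
  | sum_vertex :
      PathRel k Q (∑ v : Q.V, FreeAlgebra.ι k (PathGen.vertex v)) 1
  | src_mul (e : Q.A) :
      PathRel k Q
        (FreeAlgebra.ι k (PathGen.vertex (Q.src e)) * FreeAlgebra.ι k (PathGen.edge e))
        (FreeAlgebra.ι k (PathGen.edge e))
  | mul_tgt (e : Q.A) :
      PathRel k Q
        (FreeAlgebra.ι k (PathGen.edge e) * FreeAlgebra.ι k (PathGen.vertex (Q.tgt e)))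
        (FreeAlgebra.ι k (PathGen.edge e))

/-- The path algebra `P_k(Q)` of a finite quiver `Q`, presented by generators and relations. -/
def PathAlg (k : Type) [CommRing k] (Q : FinQuiver) : Type :=
  RingQuot (PathRel k Q)

variable (k : Type) [CommRing k] (Q : FinQuiver)

noncomputable instance : Ring (PathAlg k Q) :=
  inferInstanceAs (Ring (RingQuot (PathRel k Q)))

noncomputable instance : Algebra k (PathAlg k Q) :=
  inferInstanceAs (Algebra k (RingQuot (PathRel k Q)))

/-- The quotient map from the free algebra onto the path algebra. -/
noncomputable def PathAlg.mk : FreeAlgebra k (PathGen Q) →ₐ[k] PathAlg k Q :=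
  RingQuot.mkAlgHom k (PathRel k Q)

/-- The trivial path (vertex idempotent) `p v` in the path algebra. -/
noncomputable def PathAlg.p (v : Q.V) : PathAlg k Q :=
  PathAlg.mk k Q (FreeAlgebra.ι k (PathGen.vertex v))

/-- The arrow `e` in the path algebra. -/
noncomputable def PathAlg.arrow (e : Q.A) : PathAlg k Q :=
  PathAlg.mk k Q (FreeAlgebra.ι k (PathGen.edge e))

theorem PathAlg.mk_rel {x y : FreeAlgebra k (PathGen Q)} (h : PathRel k Q x y) :
    PathAlg.mk k Q x = PathAlg.mk k Q y :=
  RingQuot.mkAlgHom_rel k h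

theorem PathAlg.p_mul_self (v : Q.V) : PathAlg.p k Q v * PathAlg.p k Q v = PathAlg.p k Q v := by
  have h := PathAlg.mk_rel k Q (PathRel.vertex_mul_self v)
  simpa [map_mul, PathAlg.p] using h

theorem PathAlg.p_mul_ne (v w : Q.V) (hvw : v ≠ w) :
    PathAlg.p k Q v * PathAlg.p k Q w = 0 := by
  have h := PathAlg.mk_rel k Q (PathRel.vertex_mul_ne v w hvw)
  simpa [map_mul, PathAlg.p] using h

theorem PathAlg.sum_p : (∑ v : Q.V, PathAlg.p k Q v) = 1 := by
  have h := PathAlg.mk_rel k Q (PathRel.sum_vertex)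
  simpa [map_sum, PathAlg.p] using h

theorem PathAlg.arrow_mul_tgt (e : Q.A) :
    PathAlg.arrow k Q e * PathAlg.p k Q (Q.tgt e) = PathAlg.arrow k Q e := by
  have h := PathAlg.mk_rel k Q (PathRel.mul_tgt e)
  simpa [map_mul, PathAlg.p, PathAlg.arrow] using h

theorem PathAlg.src_mul_arrow (e : Q.A) :
    PathAlg.p k Q (Q.src e) * PathAlg.arrow k Q e = PathAlg.arrow k Q e := by
  have h := PathAlg.mk_rel k Q (PathRel.src_mul e)
  simpa [map_mul, PathAlg.p, PathAlg.arrow] using h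

/-- The set of vertices `{p v | v ∈ Q.V}` of the path algebra, as a finite set. -/
noncomputable def vertexFinset : Finset (PathAlg k Q) :=
  letI := Classical.decEq (PathAlg k Q)
  Finset.univ.image (PathAlg.p k Q)

end LPA

namespace LPA

/-- Generators of the Leavitt path algebra: vertex idempotents, arrows, and ghost arrows. -/
inductive LGen (Q : FinQuiver) : Type
  | vertex (v : Q.V) : LGen Q
  | edge (e : Q.A) : LGen Q
  | ghost (e : Q.A) : LGen Q

/-- Defining relations of the Leavitt path algebra `L_k(E)`: (V), (E1), (E2), (CK1), (CK2),
together with `∑ p_v = 1`. -/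
inductive LeavittRel (k : Type) [CommRing k] (Q : FinQuiver) :
    FreeAlgebra k (LGen Q) → FreeAlgebra k (LGen Q) → Prop
  | vertex_mul_self (v : Q.V) :
      LeavittRel k Q (FreeAlgebra.ι k (LGen.vertex v) * FreeAlgebra.ι k (LGen.vertex v))
        (FreeAlgebra.ι k (LGen.vertex v))
  | vertex_mul_ne (v w : Q.V) (h : v ≠ w) :
      LeavittRel k Q (FreeAlgebra.ι k (LGen.vertex v) * FreeAlgebra.ι k (LGen.vertex w)) 0
  | sum_vertex :
      LeavittRel k Q (∑ v : Q.V, FreeAlgebra.ι k (LGen.vertex v)) 1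
  | src_mul (e : Q.A) :
      LeavittRel k Q (FreeAlgebra.ι k (LGen.vertex (Q.src e)) * FreeAlgebra.ι k (LGen.edge e))
        (FreeAlgebra.ι k (LGen.edge e))
  | mul_tgt (e : Q.A) :
      LeavittRel k Q (FreeAlgebra.ι k (LGen.edge e) * FreeAlgebra.ι k (LGen.vertex (Q.tgt e)))
        (FreeAlgebra.ι k (LGen.edge e))
  | tgt_mul_ghost (e : Q.A) :
      LeavittRel k Q (FreeAlgebra.ι k (LGen.vertex (Q.tgt e)) * FreeAlgebra.ι k (LGen.ghost e))
        (FreeAlgebra.ι k (LGen.ghost e))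
  | ghost_mul_src (e : Q.A) :
      LeavittRel k Q (FreeAlgebra.ι k (LGen.ghost e) * FreeAlgebra.ι k (LGen.vertex (Q.src e)))
        (FreeAlgebra.ι k (LGen.ghost e))
  | ghost_mul_edge_self (e : Q.A) :
      LeavittRel k Q (FreeAlgebra.ι k (LGen.ghost e) * FreeAlgebra.ι k (LGen.edge e))
        (FreeAlgebra.ι k (LGen.vertex (Q.tgt e)))
  | ghost_mul_edge_ne (e f : Q.A) (h : e ≠ f) :
      LeavittRel k Q (FreeAlgebra.ι k (LGen.ghost e) * FreeAlgebra.ι k (LGen.edge f)) 0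
  | cuntz_krieger (v : Q.V) (h : ∃ e : Q.A, Q.src e = v) :
      LeavittRel k Q
        (∑ e ∈ Finset.univ.filter (fun e : Q.A => Q.src e = v),
          FreeAlgebra.ι k (LGen.edge e) * FreeAlgebra.ι k (LGen.ghost e))
        (FreeAlgebra.ι k (LGen.vertex v))

/-- The Leavitt path algebra `L_k(E)`. -/
def Leavitt (k : Type) [CommRing k] (Q : FinQuiver) : Type :=
  RingQuot (LeavittRel k Q)

variable (k : Type) [CommRing k] (Q : FinQuiver)

noncomputable instance : Ring (Leavitt k Q) :=
  inferInstanceAs (Ring (RingQuot (LeavittRel k Q)))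

noncomputable instance : Algebra k (Leavitt k Q) :=
  inferInstanceAs (Algebra k (RingQuot (LeavittRel k Q)))

/-- The quotient map from the free algebra onto the Leavitt path algebra. -/
noncomputable def Leavitt.mk : FreeAlgebra k (LGen Q) →ₐ[k] Leavitt k Q :=
  RingQuot.mkAlgHom k (LeavittRel k Q)

/-- The vertex idempotent `p v` in the Leavitt path algebra. -/
noncomputable def Leavitt.p (v : Q.V) : Leavitt k Q :=
  Leavitt.mk k Q (FreeAlgebra.ι k (LGen.vertex v))

/-- The arrow `e` in the Leavitt path algebra. -/
noncomputable def Leavitt.ed (e : Q.A) : Leavitt k Q :=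
  Leavitt.mk k Q (FreeAlgebra.ι k (LGen.edge e))

/-- The ghost arrow `ē` in the Leavitt path algebra. -/
noncomputable def Leavitt.gh (e : Q.A) : Leavitt k Q :=
  Leavitt.mk k Q (FreeAlgebra.ι k (LGen.ghost e))

theorem Leavitt.mk_rel {x y : FreeAlgebra k (LGen Q)} (h : LeavittRel k Q x y) :
    Leavitt.mk k Q x = Leavitt.mk k Q y :=
  RingQuot.mkAlgHom_rel k h

theorem Leavitt.p_mul_self (v : Q.V) : Leavitt.p k Q v * Leavitt.p k Q v = Leavitt.p k Q v := by
  have h := Leavitt.mk_rel k Q (LeavittRel.vertex_mul_self v)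
  simpa [map_mul, Leavitt.p] using h

theorem Leavitt.p_mul_ne (v w : Q.V) (hvw : v ≠ w) :
    Leavitt.p k Q v * Leavitt.p k Q w = 0 := by
  have h := Leavitt.mk_rel k Q (LeavittRel.vertex_mul_ne v w hvw)
  simpa [map_mul, Leavitt.p] using h

theorem Leavitt.sum_p : (∑ v : Q.V, Leavitt.p k Q v) = 1 := by
  have h := Leavitt.mk_rel k Q (LeavittRel.sum_vertex)
  simpa [map_sum, Leavitt.p] using h

theorem Leavitt.tgt_mul_gh (e : Q.A) :
    Leavitt.p k Q (Q.tgt e) * Leavitt.gh k Q e = Leavitt.gh k Q e := by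
  have h := Leavitt.mk_rel k Q (LeavittRel.tgt_mul_ghost e)
  simpa [map_mul, Leavitt.p, Leavitt.gh] using h

theorem Leavitt.gh_mul_src (e : Q.A) :
    Leavitt.gh k Q e * Leavitt.p k Q (Q.src e) = Leavitt.gh k Q e := by
  have h := Leavitt.mk_rel k Q (LeavittRel.ghost_mul_src e)
  simpa [map_mul, Leavitt.p, Leavitt.gh] using h

/-- The canonical embedding `P_k(Ē) → L_k(E)` of the path algebra of the inverse quiver into
the Leavitt path algebra, sending `p v ↦ p v` and each reversed arrow `ē ↦ ē`. -/
noncomputable def revToLeavitt : PathAlg k Q.rev →ₐ[k] Leavitt k Q :=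
  RingQuot.liftAlgHom k ⟨((FreeAlgebra.lift k fun g =>
    match g with
    | PathGen.vertex v => Leavitt.p k Q v
    | PathGen.edge e => Leavitt.gh k Q e : FreeAlgebra k (PathGen Q.rev) →ₐ[k] Leavitt k Q)), by
      intro x y h
      induction h with
      | vertex_mul_self v =>
          simp only [map_mul, FreeAlgebra.lift_ι_apply]
          exact Leavitt.p_mul_self k Q v
      | vertex_mul_ne v w h =>
          simp only [map_mul, map_zero, FreeAlgebra.lift_ι_apply]
          exact Leavitt.p_mul_ne k Q v w h
      | sum_vertex =>
          simp only [map_sum, map_one, FreeAlgebra.lift_ι_apply]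
          exact Leavitt.sum_p k Q
      | src_mul e =>
          simp only [map_mul, FreeAlgebra.lift_ι_apply]
          exact Leavitt.tgt_mul_gh k Q e
      | mul_tgt e =>
          simp only [map_mul, FreeAlgebra.lift_ι_apply]
          exact Leavitt.gh_mul_src k Q e⟩

/-- The canonical embedding `P_k(E) → L_k(E)` of the path algebra into the Leavitt path
algebra, sending `p v ↦ p v` and each arrow `e ↦ e`. -/
noncomputable def pathToLeavitt : PathAlg k Q →ₐ[k] Leavitt k Q :=
  RingQuot.liftAlgHom k ⟨((FreeAlgebra.lift k fun g =>
    match g with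
    | PathGen.vertex v => Leavitt.p k Q v
    | PathGen.edge e => Leavitt.ed k Q e : FreeAlgebra k (PathGen Q) →ₐ[k] Leavitt k Q)), by
      intro x y h
      induction h with
      | vertex_mul_self v =>
          simp only [map_mul, FreeAlgebra.lift_ι_apply]
          exact Leavitt.p_mul_self k Q v
      | vertex_mul_ne v w h =>
          simp only [map_mul, map_zero, FreeAlgebra.lift_ι_apply]
          exact Leavitt.p_mul_ne k Q v w h
      | sum_vertex =>
          simp only [map_sum, map_one, FreeAlgebra.lift_ι_apply]
          exact Leavitt.sum_p k Q
      | src_mul e =>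
          simp only [map_mul, FreeAlgebra.lift_ι_apply]
          have h := Leavitt.mk_rel k Q (LeavittRel.src_mul e)
          simpa [map_mul, Leavitt.p, Leavitt.ed] using h
      | mul_tgt e =>
          simp only [map_mul, FreeAlgebra.lift_ι_apply]
          have h := Leavitt.mk_rel k Q (LeavittRel.mul_tgt e)
          simpa [map_mul, Leavitt.p, Leavitt.ed] using h⟩

end LPA

namespace LPA

open TensorProduct

variable (P L : Type) [Ring P] [Ring L] (φ : P →+* L)

/-- The subgroup of relations defining the balanced tensor product `L ⊗_P M` (where `L` is a
right `P`-module via `φ` and `M` a left `P`-module) as a quotient of `L ⊗_ℤ M`. -/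
noncomputable def trel (M : Type) [AddCommGroup M] [Module P M] :
    Submodule L (TensorProduct ℤ L M) :=
  Submodule.span L
    {z | ∃ (l : L) (p : P) (m : M), z = (l * φ p) ⊗ₜ[ℤ] m - l ⊗ₜ[ℤ] (p • m)}

/-- The balanced tensor product `L ⊗_P M`, a left `L`-module. -/
abbrev TensorPhi (M : Type) [AddCommGroup M] [Module P M] : Type :=
  TensorProduct ℤ L M ⧸ trel P L φ M

/-- Functoriality of `L ⊗_P -` : the map induced on balanced tensor products by a `P`-linear
map `f : M → N`. -/
noncomputable def tmap {M N : Type} [AddCommGroup M] [Module P M] [AddCommGroup N]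
    [Module P N] (f : M →ₗ[P] N) : TensorPhi P L φ M →ₗ[L] TensorPhi P L φ N :=
  Submodule.mapQ _ _
    (TensorProduct.AlgebraTensorModule.map (LinearMap.id : L →ₗ[L] L)
      f.toAddMonoidHom.toIntLinearMap)
    (by
      refine Submodule.span_le.mpr ?_
      rintro z ⟨l, p, m, rfl⟩
      simp only [SetLike.mem_coe, Submodule.mem_comap, map_sub,
        TensorProduct.AlgebraTensorModule.map_tmul, LinearMap.id_coe, id_eq,
        AddMonoidHom.coe_toIntLinearMap, LinearMap.toAddMonoidHom_coe]
      exact Submodule.subset_span ⟨l, p, f m, by rw [f.map_smul]⟩)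

/-- `L` is flat as a right `P`-module (via `φ : P → L`): the functor `L ⊗_P -` preserves
injectivity. -/
def RightFlat : Prop :=
  ∀ (M N : Type) [AddCommGroup M] [Module P M] [AddCommGroup N] [Module P N],
    ∀ f : M →ₗ[P] N, Function.Injective f → Function.Injective (tmap P L φ f)

end LPA

namespace LPA

/-- A module over a ring `R`, bundled with its structure. -/
structure ModuleOver (R : Type) [Ring R] : Type 1 where
  carrier : Type
  [acg : AddCommGroup carrier]
  [mod : Module R carrier]

attribute [instance] ModuleOver.acg ModuleOver.mod

/-- Finite-dimensionality over `k` of a bundled `R`-module, for a `k`-algebra `R` (the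
`k`-structure being obtained by restriction of scalars). -/
def FinDimOver (k R : Type) [Field k] [Ring R] [Algebra k R] (X : ModuleOver R) : Prop :=
  letI : Module k X.carrier := Module.compHom X.carrier (algebraMap k R)
  FiniteDimensional k X.carrier

/-- There is a short exact sequence `0 → A → B → C → 0` of `R`-modules. -/
def IsSES {R : Type} [Ring R] (A B C : ModuleOver R) : Prop :=
  ∃ (f : A.carrier →ₗ[R] B.carrier) (g : B.carrier →ₗ[R] C.carrier),
    Function.Injective f ∧ Function.Surjective g ∧ LinearMap.range f = LinearMap.ker g

/-- The subgroup of relations defining `K₀` of the full subcategory determined by the class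
`C` of `R`-modules: `[B] = [A] + [C]` for every short exact sequence `0 → A → B → C → 0` of
objects of the class. -/
def K0Rel (R : Type) [Ring R] (C : ModuleOver R → Prop) :
    AddSubgroup (FreeAbelianGroup {X : ModuleOver R // C X}) :=
  AddSubgroup.closure
    {z | ∃ A B X : {X : ModuleOver R // C X}, IsSES A.1 B.1 X.1 ∧
      z = FreeAbelianGroup.of B - FreeAbelianGroup.of A - FreeAbelianGroup.of X}

/-- The Grothendieck group `K₀` of the class `C` of `R`-modules: the free abelian group on
its members, modulo the relation `[B] = [A] + [C]` for short exact sequences. -/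
abbrev K0 (R : Type) [Ring R] (C : ModuleOver R → Prop) : Type 1 :=
  FreeAbelianGroup {X : ModuleOver R // C X} ⧸ K0Rel R C

/-- The class `[X] ∈ K₀` of a module of the class `C`. -/
def K0.cls {R : Type} [Ring R] {C : ModuleOver R → Prop} {X : ModuleOver R} (hX : C X) :
    K0 R C :=
  QuotientAddGroup.mk (FreeAbelianGroup.of ⟨X, hX⟩)

/-- The class of finitely generated projective `R`-modules; `K₀` of this class is `K₀(R)`. -/
def ProjClass (R : Type) [Ring R] (X : ModuleOver R) : Prop :=
  Module.Finite R X.carrier ∧ Module.Projective R X.carrier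

/-- The class of finitely presented `R`-modules; `K₀` of this class is `K₀(fp(R))`. -/
def FpClass (R : Type) [Ring R] (X : ModuleOver R) : Prop :=
  Module.FinitePresentation R X.carrier

end LPA

namespace LPA

variable (k : Type) [Field k] (Q : FinQuiver)

/-- The class `𝓜` of finitely presented left `P_k(Ē)`-modules killed by
`L_k(E) ⊗_{P_k(Ē)} -`. -/
def MClass (X : ModuleOver (PathAlg k Q.rev)) : Prop :=
  Module.FinitePresentation (PathAlg k Q.rev) X.carrier ∧
    Subsingleton
      (TensorPhi (PathAlg k Q.rev) (Leavitt k Q) (revToLeavitt k Q).toRingHom X.carrier)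

/-- The class `fpl` of finitely presented left `P_k(Ē)`-modules of finite length. -/
def FplClass (X : ModuleOver (PathAlg k Q.rev)) : Prop :=
  Module.FinitePresentation (PathAlg k Q.rev) X.carrier ∧
    IsFiniteLength (PathAlg k Q.rev) X.carrier

end LPA


namespace LPA
section JH
variable {R : Type} [Ring R] {G : Type 1} [AddCommGroup G]

/-- The subquotient `Y / X` as a bundled module. -/
def subq {M : Type} [AddCommGroup M] [Module R M] (X Y : Submodule R M) : ModuleOver R :=
  ⟨Y ⧸ X.comap Y.subtype⟩

/-- Isomorphism invariance of a function on bundled modules. -/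
def IsoInv (f : ModuleOver R → G) : Prop :=
  ∀ X Y : ModuleOver R, Nonempty (X.carrier ≃ₗ[R] Y.carrier) → f X = f Y

/-- Sum of `f` over the factors of a composition series. -/
def serVal (f : ModuleOver R → G) {M : Type} [AddCommGroup M] [Module R M]
    (s : CompositionSeries (Submodule R M)) : G :=
  ∑ i : Fin s.length, f (subq (s i.castSucc) (s i.succ))

theorem serVal_unique {f : ModuleOver R → G} (hf : IsoInv f) {M : Type} [AddCommGroup M]
    [Module R M] (s t : CompositionSeries (Submodule R M)) (hb : s.head = t.head)
    (ht : s.last = t.last) : serVal f s = serVal f t := by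
  obtain ⟨e, he⟩ := CompositionSeries.jordan_holder s t hb ht
  unfold serVal
  rw [← e.sum_comp]
  refine Finset.sum_congr rfl fun i _ => hf _ _ ⟨(he i).linearEquiv⟩

theorem quot_equiv_of_surj {Y Y' : Type} [AddCommGroup Y] [Module R Y] [AddCommGroup Y']
    [Module R Y'] (h : Y →ₗ[R] Y') (hs : Function.Surjective h) (p : Submodule R Y)
    (p' : Submodule R Y') (hp : p = p'.comap h) : Nonempty ((Y ⧸ p) ≃ₗ[R] (Y' ⧸ p')) := by
  have hk : p = LinearMap.ker (p'.mkQ ∘ₗ h) := by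
    rw [LinearMap.ker_comp, Submodule.ker_mkQ, hp]
  exact ⟨(Submodule.quotEquivOfEq _ _ hk).trans
    (LinearMap.quotKerEquivOfSurjective _ ((Submodule.mkQ_surjective p').comp hs))⟩

theorem serVal_transport {f : ModuleOver R → G} (hf : IsoInv f) {A B : Type} [AddCommGroup A]
    [Module R A] [AddCommGroup B] [Module R B] (φ : Submodule R A → Submodule R B)
    (hm : Monotone φ)
    (hφ : ∀ X Y, X ≤ Y → Nonempty ((subq X Y).carrier ≃ₗ[R] (subq (φ X) (φ Y)).carrier))
    (s : CompositionSeries (Submodule R A)) :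
    ∃ t : CompositionSeries (Submodule R B), t.head = φ s.head ∧ t.last = φ s.last ∧
      serVal f t = serVal f s := by
  refine ⟨⟨s.length, fun i => φ (s i), fun i => ?_⟩, rfl, rfl, ?_⟩
  · have hc : s i.castSucc ⋖ s i.succ := s.step i
    obtain ⟨e⟩ := hφ _ _ hc.le
    have h1 := (covBy_iff_quot_is_simple hc.le).mp hc
    exact (covBy_iff_quot_is_simple (hm hc.le)).mpr (@IsSimpleModule.congr _ _ _ _ _ _ _ _ e.symm h1)
  · refine Finset.sum_congr rfl fun i _ => ?_
    have hc : s i.castSucc ⋖ s i.succ := s.step i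
    obtain ⟨e⟩ := hφ _ _ hc.le
    exact hf _ _ ⟨e.symm⟩

theorem serVal_smash (f : ModuleOver R → G) {M : Type} [AddCommGroup M] [Module R M]
    (s t : CompositionSeries (Submodule R M)) (h : s.last = t.head) :
    serVal f (s.smash t h) = serVal f s + serVal f t := by
  unfold serVal
  refine (Fin.sum_univ_add (a := s.length) (b := t.length) _).trans ?_
  congr 1
  · refine Finset.sum_congr rfl fun i _ => ?_
    exact congrArg f (congrArg₂ subq (RelSeries.smash_castAdd h i) (RelSeries.smash_succ_castAdd h i))
  · refine Finset.sum_congr rfl fun i _ => ?_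
    exact congrArg f (congrArg₂ subq (RelSeries.smash_natAdd h i) (RelSeries.smash_succ_natAdd h i))

open Classical in
/-- Sum of `f` over the composition factors. -/
noncomputable def jh (f : ModuleOver R → G) (X : ModuleOver R) : G :=
  if h : ∃ s : CompositionSeries (Submodule R X.carrier), s.head = ⊥ ∧ s.last = ⊤ then
    serVal f h.choose else 0

theorem jh_eq {f : ModuleOver R → G} (hf : IsoInv f) (X : ModuleOver R)
    (s : CompositionSeries (Submodule R X.carrier)) (h0 : s.head = ⊥) (h1 : s.last = ⊤) :
    jh f X = serVal f s := by
  have h : ∃ s : CompositionSeries (Submodule R X.carrier), s.head = ⊥ ∧ s.last = ⊤ := ⟨s, h0, h1⟩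
  rw [jh, dif_pos h]
  exact serVal_unique hf _ _ (h.choose_spec.1.trans h0.symm) (h.choose_spec.2.trans h1.symm)

theorem jh_add {f : ModuleOver R → G} (hf : IsoInv f) (A B C : ModuleOver R)
    (hA : IsFiniteLength R A.carrier) (hC : IsFiniteLength R C.carrier) (h : IsSES A B C) :
    jh f B = jh f A + jh f C := by
  obtain ⟨i, g, hi, hg, hex⟩ := h
  obtain ⟨s, s0, s1⟩ := isFiniteLength_iff_exists_compositionSeries.mp hA
  obtain ⟨t, t0, t1⟩ := isFiniteLength_iff_exists_compositionSeries.mp hC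
  obtain ⟨s', s0', s1', hs⟩ := serVal_transport hf (Submodule.map i)
    (fun _ _ h => Submodule.map_mono h) (fun X Y hXY => by
      refine quot_equiv_of_surj (Y := Y) (Y' := Y.map i) (i.submoduleMap Y)
        (i.submoduleMap_surjective Y) _ _ ?_
      ext y
      simp only [Submodule.mem_comap, Submodule.subtype_apply]
      change _ ↔ i y ∈ X.map i
      rw [Submodule.mem_map]
      exact ⟨fun h => ⟨_, h, rfl⟩, fun ⟨z, hz, hzy⟩ => hi hzy ▸ hz⟩) s
  obtain ⟨t', t0', t1', ht⟩ := serVal_transport hf (Submodule.comap g)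
    (fun _ _ h => Submodule.comap_mono h) (fun X Y hXY => by
      obtain ⟨e⟩ := quot_equiv_of_surj (Y := Y.comap g) (Y' := Y)
        (g.restrict (fun x hx => hx)) (fun y => by
          obtain ⟨b, hb⟩ := hg y
          exact ⟨⟨b, by simp [hb]⟩, Subtype.ext hb⟩)
        ((X.comap g).comap (Y.comap g).subtype) (X.comap Y.subtype) rfl
      exact ⟨e.symm⟩) t
  have hc : s'.last = t'.head := by
    rw [s1', t0', s1, t0, Submodule.map_top, hex]; rfl
  rw [jh_eq hf A s s0 s1, jh_eq hf C t t0 t1, jh_eq hf B (s'.smash t' hc)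
    (by rw [RelSeries.head_smash, s0', s0, Submodule.map_bot])
    (by rw [RelSeries.last_smash, t1', t1, Submodule.comap_top]), serVal_smash, hs, ht]

theorem jh_zero {f : ModuleOver R → G} (hf : IsoInv f) (X : ModuleOver R)
    [Subsingleton X.carrier] : jh f X = 0 := by
  rw [jh_eq hf X (RelSeries.singleton _ ⊥) rfl (Subsingleton.elim _ _)]
  rfl

theorem jh_simple {f : ModuleOver R → G} (hf : IsoInv f) (X : ModuleOver R)
    [IsSimpleModule R X.carrier] : jh f X = f X := by
  have hb : (⊥ : Submodule R X.carrier) ⋖ ⊤ := bot_covBy_top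
  rw [jh_eq hf X ⟨1, ![⊥, ⊤], fun i => by fin_cases i; exact hb⟩ rfl rfl]
  refine (Fin.sum_univ_one _).trans ?_
  refine hf _ _ ?_
  obtain ⟨e⟩ := quot_equiv_of_surj (R := R) (Y := (⊤ : Submodule R X.carrier)) (Y' := X.carrier)
    (Submodule.subtype _) (fun y => ⟨⟨y, trivial⟩, rfl⟩)
    ((⊥ : Submodule R X.carrier).comap (Submodule.subtype ⊤)) ⊥ rfl
  exact ⟨e.trans (Submodule.quotEquivOfEqBot _ rfl)⟩
end JH
end LPA

namespace LPA
section K0main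
variable {R : Type} [Ring R]

theorem K0.cls_add {C : ModuleOver R → Prop} {X Y Z : ModuleOver R} (hX : C X) (hY : C Y)
    (hZ : C Z) (h : IsSES X Y Z) : K0.cls hY = K0.cls hX + K0.cls hZ := by
  rw [← sub_eq_zero, ← sub_sub]
  exact (QuotientAddGroup.eq_zero_iff _).mpr
    (AddSubgroup.subset_closure ⟨⟨X, hX⟩, ⟨Y, hY⟩, ⟨Z, hZ⟩, h, rfl⟩)

theorem isSES_submodule {M : Type} [AddCommGroup M] [Module R M] (N : Submodule R M) :
    IsSES (⟨N⟩ : ModuleOver R) ⟨M⟩ ⟨M ⧸ N⟩ :=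
  ⟨N.subtype, N.mkQ, N.injective_subtype, N.mkQ_surjective, by simp⟩

theorem isSES_iso {X Y : ModuleOver R} (e : X.carrier ≃ₗ[R] Y.carrier) (Z : ModuleOver R)
    [Subsingleton Z.carrier] : IsSES X Y Z :=
  ⟨e, 0, e.injective, fun z => ⟨0, Subsingleton.elim _ _⟩, by simp⟩

theorem K0.cls_zero {C : ModuleOver R → Prop} {X : ModuleOver R} (hX : C X)
    [Subsingleton X.carrier] : K0.cls hX = 0 := by
  have := K0.cls_add hX hX hX (isSES_iso (LinearEquiv.refl R _) X)
  simpa using this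

/-- Universal property of `K0`. -/
theorem K0.exists_lift {C : ModuleOver R → Prop} {G : Type 1} [AddCommGroup G]
    (f : ∀ X, C X → G)
    (hf : ∀ X Y Z (hX : C X) (hY : C Y) (hZ : C Z), IsSES X Y Z → f Y hY = f X hX + f Z hZ) :
    ∃ j : K0 R C →+ G, ∀ X (hX : C X), j (K0.cls hX) = f X hX := by
  refine ⟨QuotientAddGroup.lift _ (FreeAbelianGroup.lift fun X => f X.1 X.2) ?_, fun X hX => ?_⟩
  · rw [K0Rel, AddSubgroup.closure_le]
    rintro z ⟨A, B, X, h, rfl⟩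
    simp [hf _ _ _ A.2 B.2 X.2 h]
  · exact FreeAbelianGroup.lift_apply_of _ _

theorem K0.induction_cls {C : ModuleOver R → Prop} {p : K0 R C → Prop}
    (h0 : p 0) (hc : ∀ X (hX : C X), p (K0.cls hX)) (hn : ∀ x, p x → p (-x))
    (ha : ∀ x y, p x → p y → p (x + y)) (x : K0 R C) : p x := by
  obtain ⟨x, rfl⟩ := QuotientAddGroup.mk_surjective x
  induction x using FreeAbelianGroup.induction_on with
  | zero => exact h0
  | of x => exact hc x.1 x.2
  | neg x h => exact hn _ h
  | add x y hx hy => exact ha _ _ hx hy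

theorem dev_of_serre {C : ModuleOver R → Prop}
    (hS : ∀ X Y Z, IsSES X Y Z → (C Y ↔ C X ∧ C Z))
    (P : ∀ X, C X → Prop) (h0 : ∀ X (hX : C X), Subsingleton X.carrier → P X hX)
    (hs : ∀ X Y Z (hX : C X) (hY : C Y) (hZ : C Z), IsSES X Y Z →
      IsSimpleModule R Z.carrier → P X hX → P Y hY)
    (X : ModuleOver R) (hX : C X) (hl : IsFiniteLength R X.carrier) : P X hX := by
  suffices ∀ (M : Type) [AddCommGroup M] [Module R M], IsFiniteLength R M →
      ∀ h : C ⟨M⟩, P ⟨M⟩ h from this X.carrier hl hX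
  intro M _ _ hM
  induction hM with
  | of_subsingleton => intro h; exact h0 _ h ‹_›
  | @of_simple_quotient M _ _ N hq _ ih =>
    intro h
    have h2 := (hS _ _ _ (isSES_submodule N)).mp h
    exact hs ⟨N⟩ ⟨M⟩ ⟨M ⧸ N⟩ h2.1 h h2.2 (isSES_submodule N) hq (ih h2.1)

theorem K0_main (C D : ModuleOver R → Prop) (hCD : ∀ X, C X → D X)
    (hD : ∀ X, D X → IsFiniteLength R X.carrier)
    (hS : ∀ X Y Z, IsSES X Y Z → (C Y ↔ C X ∧ C Z)) :
    ∃ j : K0 R C →+ K0 R D,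
      (∀ (X : ModuleOver R) (hX : C X) (hX' : D X), j (K0.cls hX) = K0.cls hX') ∧
      Function.Injective j ∧
      AddMonoidHom.range j = AddSubgroup.closure
        {x | ∃ (X : ModuleOver R) (hX' : D X),
          IsSimpleModule R X.carrier ∧ C X ∧ x = K0.cls hX'} := by
  classical
  obtain ⟨j, hj⟩ := K0.exists_lift (C := C) (fun X hX => (K0.cls (hCD X hX) : K0 R D))
    (fun X Y Z hX hY hZ h => K0.cls_add _ _ _ h)
  let f : ModuleOver R → K0 R C := fun X => if h : C X then K0.cls h else 0
  have hf : IsoInv f := by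
    rintro X Y ⟨e⟩
    by_cases hX : C X
    · have h0 : C ⟨(⊥ : Submodule R X.carrier)⟩ :=
        ((hS _ ⟨X.carrier⟩ _ (isSES_submodule ⊥)).mp hX).1
      have hs := isSES_iso e ⟨(⊥ : Submodule R X.carrier)⟩
      have hY : C Y := (hS _ _ _ hs).mpr ⟨hX, h0⟩
      simp only [f, dif_pos hX, dif_pos hY]
      haveI : Subsingleton (⟨(⊥ : Submodule R X.carrier)⟩ : ModuleOver R).carrier :=
        inferInstanceAs (Subsingleton (⊥ : Submodule R X.carrier))
      rw [K0.cls_add hX hY h0 hs, K0.cls_zero h0, add_zero]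
    · have hY : ¬ C Y := fun hY => hX (by
        have h0 : C ⟨(⊥ : Submodule R Y.carrier)⟩ :=
          ((hS _ ⟨Y.carrier⟩ _ (isSES_submodule ⊥)).mp hY).1
        exact (hS _ _ _ (isSES_iso e.symm ⟨(⊥ : Submodule R Y.carrier)⟩)).mpr ⟨hY, h0⟩)
      simp only [f, dif_neg hX, dif_neg hY]
  obtain ⟨r, hr⟩ := K0.exists_lift (C := D) (fun X _ => jh f X)
    (fun X Y Z hX hY hZ h => jh_add hf X Y Z (hD X hX) (hD Z hZ) h)
  have hrj : ∀ x, r (j x) = x := by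
    intro x
    induction x using K0.induction_cls with
    | h0 => simp
    | hn x h => rw [map_neg, map_neg, h]
    | ha x y hx hy => rw [map_add, map_add, hx, hy]
    | hc X hX =>
      rw [hj, hr]
      refine dev_of_serre hS (fun X hX => jh f X = K0.cls hX) ?_ ?_ X hX (hD _ (hCD _ hX))
      · intro X hX hs
        rw [jh_zero hf, K0.cls_zero]
      · intro X Y Z hX hY hZ h hs ih
        rw [jh_add hf X Y Z (hD _ (hCD _ hX)) (hD _ (hCD _ hZ)) h, ih, K0.cls_add hX hY hZ h,
          jh_simple hf]
        simp only [f, dif_pos hZ]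
  refine ⟨j, fun X hX _ => hj X hX, Function.LeftInverse.injective hrj, le_antisymm ?_ ?_⟩
  · rintro _ ⟨x, rfl⟩
    induction x using K0.induction_cls with
    | h0 => simp
    | hn x h => rw [map_neg]; exact neg_mem h
    | ha x y hx hy => rw [map_add]; exact add_mem hx hy
    | hc X hX =>
      rw [hj]
      refine dev_of_serre hS (fun X hX => K0.cls (hCD X hX) ∈ AddSubgroup.closure
        {x | ∃ (X : ModuleOver R) (hX' : D X),
          IsSimpleModule R X.carrier ∧ C X ∧ x = K0.cls hX'}) ?_ ?_ X hX (hD _ (hCD _ hX))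
      · intro X hX hs
        rw [K0.cls_zero]; exact zero_mem _
      · intro X Y Z hX hY hZ h hs ih
        rw [K0.cls_add (hCD _ hX) (hCD _ hY) (hCD _ hZ) h]
        exact add_mem ih (AddSubgroup.subset_closure ⟨Z, hCD _ hZ, hs, hZ, rfl⟩)
  · rw [AddSubgroup.closure_le]
    rintro _ ⟨X, hX', _, hC, rfl⟩
    exact ⟨K0.cls hC, hj X hC⟩
end K0main
end LPA

namespace LPA
section Alg
variable (k : Type) [Field k] (Q : FinQuiver)

/-- vertex idempotents of `P_k(Ē)`. -/
noncomputable def pv (v : Q.V) : PathAlg k Q.rev := PathAlg.p k Q.rev v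

/-- arrows of `P_k(Ē)`. -/
noncomputable def ga (e : Q.A) : PathAlg k Q.rev := PathAlg.arrow k Q.rev e

theorem pv_mul_self (v : Q.V) : pv k Q v * pv k Q v = pv k Q v := PathAlg.p_mul_self k Q.rev v

theorem pv_mul_ne (v w : Q.V) (h : v ≠ w) : pv k Q v * pv k Q w = 0 :=
  PathAlg.p_mul_ne k Q.rev v w h

theorem sum_pv : ∑ v : Q.V, pv k Q v = 1 := PathAlg.sum_p k Q.rev

theorem ga_mul_pv (e : Q.A) : ga k Q e * pv k Q (Q.src e) = ga k Q e :=
  PathAlg.arrow_mul_tgt k Q.rev e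

theorem pv_mul_ga (e : Q.A) : pv k Q (Q.tgt e) * ga k Q e = ga k Q e :=
  PathAlg.src_mul_arrow k Q.rev e

theorem rev_pv (v : Q.V) : revToLeavitt k Q (pv k Q v) = Leavitt.p k Q v := by
  unfold revToLeavitt pv PathAlg.p PathAlg.mk
  refine (RingQuot.liftAlgHom_mkAlgHom_apply k _ _ _).trans ?_
  exact FreeAlgebra.lift_ι_apply _ _

theorem rev_ga (e : Q.A) : revToLeavitt k Q (ga k Q e) = Leavitt.gh k Q e := by
  unfold revToLeavitt ga PathAlg.arrow PathAlg.mk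
  refine (RingQuot.liftAlgHom_mkAlgHom_apply k _ _ _).trans ?_
  exact FreeAlgebra.lift_ι_apply _ _

theorem path_induction {C : PathAlg k Q.rev → Prop}
    (hk : ∀ c : k, C (algebraMap k _ c)) (hv : ∀ v, C (pv k Q v)) (he : ∀ e, C (ga k Q e))
    (hm : ∀ a b, C a → C b → C (a * b)) (ha : ∀ a b, C a → C b → C (a + b))
    (x : PathAlg k Q.rev) : C x := by
  obtain ⟨x, rfl⟩ := RingQuot.mkAlgHom_surjective k (PathRel k Q.rev) x
  change C (PathAlg.mk k Q.rev x)
  induction x using FreeAlgebra.induction with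
  | grade0 c => rw [AlgHom.commutes]; exact hk c
  | grade1 g =>
    cases g with
    | vertex v => exact hv v
    | edge e => exact he e
  | mul a b h1 h2 => rw [map_mul]; exact hm _ _ h1 h2
  | add a b h1 h2 => rw [map_add]; exact ha _ _ h1 h2

variable {M : Type} [AddCommGroup M] [Module (PathAlg k Q.rev) M]

/-- Action of the word `e₁ … eₙ`: `m ↦ ēₙ ⋯ ē₁ m`. -/
noncomputable def wact (k : Type) [Field k] (Q : FinQuiver) {M : Type} [AddCommGroup M]
    [Module (PathAlg k Q.rev) M] : List Q.A → M → M
  | [], m => m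
  | e :: l, m => wact k Q l (ga k Q e • m)

theorem wact_add (l : List Q.A) (m m' : M) : wact k Q l (m + m') = wact k Q l m + wact k Q l m' := by
  induction l generalizing m m' with
  | nil => rfl
  | cons e l ih => simp only [wact, smul_add, ih]

theorem wact_zero (l : List Q.A) : wact k Q l (0 : M) = 0 := by
  induction l with
  | nil => rfl
  | cons e l ih => simp only [wact, smul_zero, ih]

theorem wact_append (l l' : List Q.A) (m : M) :
    wact k Q (l ++ l') m = wact k Q l' (wact k Q l m) := by
  induction l generalizing m with
  | nil => rfl
  | cons e l ih => simp only [wact, List.cons_append, ih]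

theorem wact_map {N : Type} [AddCommGroup N] [Module (PathAlg k Q.rev) N]
    (f : M →ₗ[PathAlg k Q.rev] N) (l : List Q.A) (m : M) :
    f (wact k Q l m) = wact k Q l (f m) := by
  induction l generalizing m with
  | nil => rfl
  | cons e l ih => simp only [wact, ih, map_smul]

/-- Torsion modules. -/
def Tors (k : Type) [Field k] (Q : FinQuiver) (M : Type) [AddCommGroup M]
    [Module (PathAlg k Q.rev) M] : Prop :=
  (∀ v, (∀ e, Q.src e ≠ v) → ∀ m : M, pv k Q v • m = 0) ∧
    ∀ m : M, ∃ n, ∀ l : List Q.A, n ≤ l.length → wact k Q l m = 0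

theorem tors_ses {A B C : Type} [AddCommGroup A] [Module (PathAlg k Q.rev) A]
    [AddCommGroup B] [Module (PathAlg k Q.rev) B] [AddCommGroup C] [Module (PathAlg k Q.rev) C]
    (f : A →ₗ[PathAlg k Q.rev] B) (g : B →ₗ[PathAlg k Q.rev] C) (hf : Function.Injective f)
    (hg : Function.Surjective g) (hfg : LinearMap.range f = LinearMap.ker g) :
    Tors k Q B ↔ Tors k Q A ∧ Tors k Q C := by
  constructor
  · intro h
    refine ⟨⟨fun v hv m => hf ?_, fun m => ?_⟩, ⟨fun v hv m => ?_, fun m => ?_⟩⟩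
    · rw [map_smul, h.1 v hv, map_zero]
    · obtain ⟨n, hn⟩ := h.2 (f m)
      exact ⟨n, fun l hl => hf (by rw [wact_map, hn l hl, map_zero])⟩
    · obtain ⟨b, rfl⟩ := hg m
      rw [← map_smul, h.1 v hv, map_zero]
    · obtain ⟨b, rfl⟩ := hg m
      obtain ⟨n, hn⟩ := h.2 b
      exact ⟨n, fun l hl => by rw [← wact_map, hn l hl, map_zero]⟩
  · rintro ⟨hA, hC⟩
    have key : ∀ b, g b = 0 → ∃ a, f a = b := fun b hb => by
      have : b ∈ LinearMap.range f := by rw [hfg]; exact hb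
      exact this
    refine ⟨fun v hv b => ?_, fun b => ?_⟩
    · obtain ⟨a, ha⟩ := key (pv k Q v • b) (by rw [map_smul, hC.1 v hv])
      rw [← pv_mul_self, mul_smul, ← ha, ← map_smul, hA.1 v hv, map_zero]
    · obtain ⟨n, hn⟩ := hC.2 (g b)
      have h1 : ∀ l : List.Vector Q.A n, ∃ N, ∀ l' : List Q.A, N ≤ l'.length →
          wact k Q l' (wact k Q l.1 b) = 0 := by
        intro l
        obtain ⟨a, ha⟩ := key (wact k Q l.1 b) (by rw [wact_map, hn _ l.2.ge])
        obtain ⟨N, hN⟩ := hA.2 a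
        exact ⟨N, fun l' hl' => by rw [← ha, ← wact_map, hN l' hl', map_zero]⟩
      choose N hN using h1
      refine ⟨n + Finset.univ.sup N, fun l hl => ?_⟩
      rw [← List.take_append_drop n l, wact_append]
      let lv : List.Vector Q.A n := ⟨l.take n, by simp; omega⟩
      have hle : N lv ≤ Finset.univ.sup N := Finset.le_sup (Finset.mem_univ lv)
      refine hN lv _ ?_
      rw [List.length_drop]; omega

/-- A torsion module is killed by the Leavitt path algebra. -/
theorem subsingleton_of_tors (h : Tors k Q M) :
    Subsingleton (TensorPhi (PathAlg k Q.rev) (Leavitt k Q) (revToLeavitt k Q).toRingHom M) := by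
  let T := TensorPhi (PathAlg k Q.rev) (Leavitt k Q) (revToLeavitt k Q).toRingHom M
  let t : Leavitt k Q → M → T := fun l m => Submodule.Quotient.mk (TensorProduct.tmul ℤ l m)
  have t_bal : ∀ l p m, t (l * revToLeavitt k Q p) m = t l (p • m) := fun l p m =>
    (Submodule.Quotient.eq _).mpr (Submodule.subset_span ⟨l, p, m, rfl⟩)
  have t_zero : ∀ l, t l 0 = 0 := fun l => by simp only [t, TensorProduct.tmul_zero]; rfl
  have t_addl : ∀ l l' m, t (l + l') m = t l m + t l' m := fun l l' m => by
    simp only [t, TensorProduct.add_tmul]; rfl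
  have t_zerol : ∀ m, t 0 m = 0 := fun m => by simp only [t, TensorProduct.zero_tmul]; rfl
  have t_suml : ∀ {ι : Type} (s : Finset ι) (a : ι → Leavitt k Q) m,
      t (∑ i ∈ s, a i) m = ∑ i ∈ s, t (a i) m := fun s a m => by
    classical
    induction s using Finset.induction_on with
    | empty => simp [t_zerol]
    | insert i s hi ih => rw [Finset.sum_insert hi, Finset.sum_insert hi, t_addl, ih]
  have key : ∀ n (l : Leavitt k Q) (m : M),
      (∀ w : List Q.A, n ≤ w.length → wact k Q w m = 0) → t l m = 0 := by
    intro n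
    induction n with
    | zero =>
      intro l m hm
      have : m = 0 := hm [] (Nat.zero_le _)
      rw [this, t_zero]
    | succ n ih =>
      intro l m hm
      have h1 : l = ∑ v, l * Leavitt.p k Q v := by
        rw [← Finset.mul_sum, Leavitt.sum_p, mul_one]
      rw [h1, t_suml]
      refine Finset.sum_eq_zero fun v _ => ?_
      by_cases hv : ∃ e, Q.src e = v
      · have h2 := Leavitt.mk_rel k Q (LeavittRel.cuntz_krieger v hv)
        rw [map_sum] at h2
        change _ = Leavitt.p k Q v at h2
        rw [← h2, Finset.mul_sum, t_suml]
        refine Finset.sum_eq_zero fun e _ => ?_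
        rw [map_mul, ← mul_assoc]
        change t (_ * Leavitt.gh k Q e) m = 0
        rw [← rev_ga, t_bal]
        exact ih _ _ fun w hw => hm (e :: w) (by simpa using hw)
      · push Not at hv
        rw [← rev_pv, t_bal, h.1 v hv, t_zero]
  refine ⟨fun x y => ?_⟩
  suffices ∀ x : T, x = 0 from (this x).trans (this y).symm
  intro x
  obtain ⟨x, rfl⟩ := Submodule.Quotient.mk_surjective _ x
  induction x using TensorProduct.induction_on with
  | zero => rfl
  | tmul l m =>
    obtain ⟨n, hn⟩ := h.2 m
    exact key n l m hn
  | add a b ha hb =>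
    rw [Submodule.Quotient.mk_add, ha, hb, add_zero]

end Alg
end LPA

namespace LPA
section Germ
variable (k : Type) [Field k] (Q : FinQuiver)
variable (M : Type) [AddCommGroup M] [Module k M]

/-- Starting vertex of a path. -/
def start : List Q.A → Q.V → Q.V
  | [], w => w
  | e :: _, _ => Q.src e

/-- Composability of a path. -/
def valid : List Q.A → Q.V → Prop
  | [], _ => True
  | e :: l, w => start Q l w = Q.tgt e ∧ valid l w

/-- Restriction to paths starting at `v`. -/
def opP (v : Q.V) : (List Q.A × Q.V → M) →ₗ[k] (List Q.A × Q.V → M) where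
  toFun x a := if start Q a.1 a.2 = v then x a else 0
  map_add' x y := by ext a; simp only [Pi.add_apply]; split_ifs <;> simp
  map_smul' c x := by ext a; simp only [Pi.smul_apply, RingHom.id_apply]; split_ifs <;> simp

/-- Ghost operator. -/
def opG (e : Q.A) : (List Q.A × Q.V → M) →ₗ[k] (List Q.A × Q.V → M) where
  toFun x a := if start Q a.1 a.2 = Q.tgt e then x (e :: a.1, a.2) else 0
  map_add' x y := by ext a; simp only [Pi.add_apply]; split_ifs <;> simp
  map_smul' c x := by ext a; simp only [Pi.smul_apply, RingHom.id_apply]; split_ifs <;> simp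

/-- Value of the edge operator. -/
def opEfun (e : Q.A) (x : List Q.A × Q.V → M) : List Q.A → Q.V → M
  | [], _ => 0
  | e' :: l, w => if e' = e ∧ start Q l w = Q.tgt e then x (l, w) else 0

/-- Edge operator. -/
def opE (e : Q.A) : (List Q.A × Q.V → M) →ₗ[k] (List Q.A × Q.V → M) where
  toFun x a := opEfun Q M e x a.1 a.2
  map_add' x y := by
    ext ⟨l, w⟩
    cases l
    · simp [opEfun]
    · simp only [Pi.add_apply, opEfun]; split_ifs <;> simp
  map_smul' c x := by
    ext ⟨l, w⟩
    cases l
    · simp [opEfun]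
    · simp only [Pi.smul_apply, RingHom.id_apply, opEfun]; split_ifs <;> simp

/-- Functions vanishing on all long paths and all paths ending at a sink. -/
def germZ : Submodule k (List Q.A × Q.V → M) where
  carrier := {x | ∃ n : ℕ, ∀ l w, valid Q l w → (n ≤ l.length ∨ ∀ e, Q.src e ≠ w) → x (l, w) = 0}
  zero_mem' := ⟨0, fun _ _ _ _ => rfl⟩
  add_mem' := by
    rintro x y ⟨n, hn⟩ ⟨n', hn'⟩
    refine ⟨max n n', fun l w hv h => ?_⟩
    rw [Pi.add_apply, hn l w hv (h.imp_left (le_trans (le_max_left _ _))),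
      hn' l w hv (h.imp_left (le_trans (le_max_right _ _))), add_zero]
  smul_mem' := by
    rintro c x ⟨n, hn⟩
    exact ⟨n, fun l w hv h => by rw [Pi.smul_apply, hn l w hv h, smul_zero]⟩

theorem opP_mem (v : Q.V) : germZ k Q M ≤ (germZ k Q M).comap (opP k Q M v) := by
  rintro x ⟨n, hn⟩
  refine ⟨n, fun l w hv h => ?_⟩
  change (if _ then _ else _) = _
  split_ifs
  · exact hn l w hv h
  · rfl

theorem opG_mem (e : Q.A) : germZ k Q M ≤ (germZ k Q M).comap (opG k Q M e) := by
  rintro x ⟨n, hn⟩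
  refine ⟨n, fun l w hv h => ?_⟩
  change (if _ then _ else _) = _
  split_ifs with hs
  · exact hn _ w ⟨hs, hv⟩ (h.imp_left fun h => h.trans (by simp))
  · rfl

theorem opE_mem (e : Q.A) : germZ k Q M ≤ (germZ k Q M).comap (opE k Q M e) := by
  rintro x ⟨n, hn⟩
  refine ⟨n + 1, fun l w hv h => ?_⟩
  cases l with
  | nil => rfl
  | cons e' l =>
    change (if _ then _ else _) = _
    split_ifs with hs
    · exact hn _ w hv.2 (h.imp_left fun h => by simpa using h)
    · rfl

/-- The module of germs. -/
abbrev Germ : Type := (List Q.A × Q.V → M) ⧸ germZ k Q M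

/-- generators acting on germs -/
def gact : LGen Q → Module.End k (Germ k Q M)
  | .vertex v => Submodule.mapQ _ _ (opP k Q M v) (opP_mem k Q M v)
  | .edge e => Submodule.mapQ _ _ (opE k Q M e) (opE_mem k Q M e)
  | .ghost e => Submodule.mapQ _ _ (opG k Q M e) (opG_mem k Q M e)

/-- The Leavitt path algebra acts on germs. -/
noncomputable def leavittAct : Leavitt k Q →ₐ[k] Module.End k (Germ k Q M) :=
  RingQuot.liftAlgHom k ⟨FreeAlgebra.lift k (gact k Q M), by
    intro x y h
    refine Submodule.linearMap_qext _ (LinearMap.ext fun f => ?_)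
    induction h with
    | vertex_mul_self v =>
      simp only [map_mul, FreeAlgebra.lift_ι_apply]
      refine congrArg (Submodule.Quotient.mk (p := germZ k Q M)) (funext fun a => ?_)
      simp only [opP, LinearMap.coe_mk, AddHom.coe_mk]
      split_ifs <;> rfl
    | vertex_mul_ne v w h =>
      simp only [map_mul, map_zero, FreeAlgebra.lift_ι_apply]
      refine congrArg (Submodule.Quotient.mk (p := germZ k Q M)) (funext fun a => ?_)
      simp only [opP, LinearMap.coe_mk, AddHom.coe_mk]
      split_ifs with h1 h2
      · exact absurd (h1.symm.trans h2) h
      · rfl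
      · rfl
    | sum_vertex =>
      simp only [map_sum, map_one, FreeAlgebra.lift_ι_apply]
      have : f = ∑ v, opP k Q M v f := by
        ext a
        simp [opP, Finset.sum_apply]
      conv_rhs => rw [this]
      rw [LinearMap.comp_apply, LinearMap.sum_apply, LinearMap.comp_apply, map_sum]
      rfl
    | src_mul e =>
      simp only [map_mul, FreeAlgebra.lift_ι_apply]
      refine congrArg (Submodule.Quotient.mk (p := germZ k Q M)) (funext fun ⟨l, w⟩ => ?_)
      simp only [opP, opE, LinearMap.coe_mk, AddHom.coe_mk]
      cases l with
      | nil => simp [opEfun]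
      | cons e' l =>
        simp only [opEfun]
        split_ifs with h1 h2 h2
        · rfl
        · rfl
        · exact absurd (congrArg Q.src h2.1) h1
        · rfl
    | mul_tgt e =>
      simp only [map_mul, FreeAlgebra.lift_ι_apply]
      refine congrArg (Submodule.Quotient.mk (p := germZ k Q M)) (funext fun ⟨l, w⟩ => ?_)
      simp only [opP, opE, LinearMap.coe_mk, AddHom.coe_mk]
      cases l with
      | nil => simp [opEfun]
      | cons e' l =>
        simp only [opEfun]
        split_ifs with h1 h2
        · rfl
        · exact absurd h1.2 h2
        · rfl
    | tgt_mul_ghost e =>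
      simp only [map_mul, FreeAlgebra.lift_ι_apply]
      refine congrArg (Submodule.Quotient.mk (p := germZ k Q M)) (funext fun ⟨l, w⟩ => ?_)
      simp only [opP, opG, LinearMap.coe_mk, AddHom.coe_mk]
      split_ifs <;> rfl
    | ghost_mul_src e =>
      simp only [map_mul, FreeAlgebra.lift_ι_apply]
      refine congrArg (Submodule.Quotient.mk (p := germZ k Q M)) (funext fun ⟨l, w⟩ => ?_)
      simp only [opP, opG, LinearMap.coe_mk, AddHom.coe_mk]
      split_ifs with h1 h2
      · rfl
      · exact absurd rfl h2
      · rfl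
    | ghost_mul_edge_self e =>
      simp only [map_mul, FreeAlgebra.lift_ι_apply]
      refine congrArg (Submodule.Quotient.mk (p := germZ k Q M)) (funext fun ⟨l, w⟩ => ?_)
      simp only [opP, opG, opE, opEfun, LinearMap.coe_mk, AddHom.coe_mk, true_and]
      split_ifs <;> rfl
    | ghost_mul_edge_ne e e' h =>
      simp only [map_mul, map_zero, FreeAlgebra.lift_ι_apply]
      refine congrArg (Submodule.Quotient.mk (p := germZ k Q M)) (funext fun ⟨l, w⟩ => ?_)
      simp only [opG, opE, opEfun, LinearMap.coe_mk, AddHom.coe_mk, h, false_and, if_false,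
        ite_self]
      rfl
    | cuntz_krieger v hv =>
      simp only [map_sum, map_mul, FreeAlgebra.lift_ι_apply]
      rw [LinearMap.comp_apply, LinearMap.sum_apply]
      change ∑ e ∈ Finset.univ.filter (fun e : Q.A => Q.src e = v),
        (germZ k Q M).mkQ (opE k Q M e (opG k Q M e f)) = (germZ k Q M).mkQ (opP k Q M v f)
      rw [← map_sum, ← sub_eq_zero, ← map_sub, Submodule.mkQ_apply, Submodule.Quotient.mk_eq_zero]
      refine ⟨1, fun l w hval h => ?_⟩
      rw [Pi.sub_apply, sub_eq_zero, Finset.sum_apply]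
      cases l with
      | nil =>
        have hw : w ≠ v := by
          rintro rfl
          obtain ⟨e, he⟩ := hv
          rcases h with h | h
          · simp at h
          · exact h e he
        simp [opE, opP, opEfun, start, hw]
      | cons e' l =>
        simp only [opE, opP, opG, opEfun, LinearMap.coe_mk, AddHom.coe_mk]
        rw [Finset.sum_filter]
        rw [Finset.sum_eq_single e']
        · have := hval.1
          have hs : start Q (e' :: l) w = Q.src e' := rfl
          simp [this, hs]
        · intro e _ he
          simp [he.symm]
        · simp⟩

theorem leavittAct_p (v : Q.V) : leavittAct k Q M (Leavitt.p k Q v) = gact k Q M (.vertex v) := by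
  unfold leavittAct Leavitt.p Leavitt.mk
  refine (RingQuot.liftAlgHom_mkAlgHom_apply k _ _ _).trans ?_
  exact FreeAlgebra.lift_ι_apply _ _

theorem leavittAct_gh (e : Q.A) : leavittAct k Q M (Leavitt.gh k Q e) = gact k Q M (.ghost e) := by
  unfold leavittAct Leavitt.gh Leavitt.mk
  refine (RingQuot.liftAlgHom_mkAlgHom_apply k _ _ _).trans ?_
  exact FreeAlgebra.lift_ι_apply _ _

variable [Module (PathAlg k Q.rev) M] [IsScalarTower k (PathAlg k Q.rev) M]

/-- The canonical map from a module to its germs. -/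
noncomputable def toFun0 (m : M) : List Q.A × Q.V → M := fun a => pv k Q a.2 • wact k Q a.1 m

/-- The canonical map from a module to its germs. -/
noncomputable def toGerm : M →+ Germ k Q M where
  toFun m := (germZ k Q M).mkQ (toFun0 k Q M m)
  map_zero' := by
    rw [← map_zero (germZ k Q M).mkQ]
    congr 1; ext a; simp [toFun0, wact_zero]
  map_add' m m' := by
    rw [← map_add]
    congr 1; ext a; simp [toFun0, wact_add]

theorem toGerm_smul (p : PathAlg k Q.rev) (m : M) :
    toGerm k Q M (p • m) = leavittAct k Q M (revToLeavitt k Q p) (toGerm k Q M m) := by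
  induction p using path_induction generalizing m with
  | hk c =>
    rw [AlgHom.commutes, AlgHom.commutes, algebraMap_smul, Module.algebraMap_end_apply]
    change (germZ k Q M).mkQ _ = c • (germZ k Q M).mkQ _
    rw [← map_smul]
    congr 1; ext ⟨l, w⟩
    simp only [toFun0, Pi.smul_apply]
    have : wact k Q l (c • m) = c • wact k Q l m := by
      induction l generalizing m with
      | nil => rfl
      | cons e l ih => simp only [wact]; rw [smul_algebra_smul_comm, ih]
    rw [this, smul_algebra_smul_comm]
  | hv v =>
    rw [rev_pv, leavittAct_p]
    change (germZ k Q M).mkQ _ = (germZ k Q M).mkQ _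
    congr 1; ext ⟨l, w⟩
    simp only [toFun0, opP, LinearMap.coe_mk, AddHom.coe_mk]
    cases l with
    | nil =>
      simp only [wact, ← mul_smul]
      split_ifs with h
      · replace h : w = v := h
        rw [h, pv_mul_self]
      · replace h : w ≠ v := h
        rw [pv_mul_ne k Q _ _ h, zero_smul]
    | cons e l =>
      simp only [wact, ← mul_smul (ga k Q e)]
      split_ifs with h
      · replace h : Q.src e = v := h
        rw [← h, ga_mul_pv]
      · replace h : Q.src e ≠ v := h
        rw [← ga_mul_pv, mul_assoc, pv_mul_ne k Q _ _ h, mul_zero, zero_smul, wact_zero, smul_zero]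
  | he e =>
    rw [rev_ga, leavittAct_gh]
    change (germZ k Q M).mkQ _ = (germZ k Q M).mkQ _
    congr 1; ext ⟨l, w⟩
    simp only [toFun0, opG, LinearMap.coe_mk, AddHom.coe_mk]
    split_ifs with h
    · rfl
    · cases l with
      | nil =>
        simp only [wact, start] at h ⊢
        rw [← pv_mul_ga, ← mul_smul, ← mul_assoc, pv_mul_ne k Q _ _ h, zero_mul, zero_smul]
      | cons e' l =>
        simp only [wact, start] at h ⊢
        rw [← mul_smul, ← ga_mul_pv, ← pv_mul_ga k Q e, mul_assoc, ← mul_assoc (pv k Q _),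
          pv_mul_ne k Q _ _ h, zero_mul, mul_zero, zero_smul, wact_zero, smul_zero]
  | hm a b ha hb => rw [mul_smul, ha, hb, map_mul, map_mul]; rfl
  | ha a b ha hb => rw [add_smul, map_add, ha, hb, map_add, map_add]; rfl

theorem toGerm_eq_zero (h : Subsingleton
    (TensorPhi (PathAlg k Q.rev) (Leavitt k Q) (revToLeavitt k Q).toRingHom M)) (m : M) :
    toGerm k Q M m = 0 := by
  letI : Module (Leavitt k Q) (Germ k Q M) :=
    Module.compHom _ (leavittAct k Q M).toRingHom
  let ι : M →ₗ[ℤ] Germ k Q M := (toGerm k Q M).toIntLinearMap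
  let ψ : TensorProduct ℤ (Leavitt k Q) M →ₗ[Leavitt k Q] Germ k Q M :=
    TensorProduct.AlgebraTensorModule.lift
      (LinearMap.toSpanSingleton (Leavitt k Q) (M →ₗ[ℤ] Germ k Q M) ι)
  have hψ : ∀ l m, ψ (TensorProduct.tmul ℤ l m) = l • toGerm k Q M m := fun l m => rfl
  have hle : trel (PathAlg k Q.rev) (Leavitt k Q) (revToLeavitt k Q).toRingHom M ≤
      LinearMap.ker ψ := by
    rw [trel, Submodule.span_le]
    rintro _ ⟨l, p, m, rfl⟩
    rw [SetLike.mem_coe, LinearMap.mem_ker, map_sub, hψ, hψ, toGerm_smul, sub_eq_zero, mul_smul]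
    rfl
  have h1 : (TensorProduct.tmul ℤ (1 : Leavitt k Q) m) ∈
      trel (PathAlg k Q.rev) (Leavitt k Q) (revToLeavitt k Q).toRingHom M :=
    (Submodule.Quotient.mk_eq_zero _).mp (Subsingleton.elim _ _)
  have h2 : ψ (TensorProduct.tmul ℤ (1 : Leavitt k Q) m) = 0 := hle h1
  rwa [hψ, one_smul] at h2

theorem tors_of_subsingleton (h : Subsingleton
    (TensorPhi (PathAlg k Q.rev) (Leavitt k Q) (revToLeavitt k Q).toRingHom M)) :
    Tors k Q M := by
  have key : ∀ m : M, ∃ n : ℕ, ∀ l w, valid Q l w → (n ≤ l.length ∨ ∀ e, Q.src e ≠ w) →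
      pv k Q w • wact k Q l m = 0 := fun m =>
    (Submodule.Quotient.mk_eq_zero _).mp (toGerm_eq_zero k Q M h m)
  -- words that are not composable act as zero
  have hinv : ∀ (l : List Q.A) (w : Q.V) (m : M), ¬ valid Q l w → pv k Q w • wact k Q l m = 0 := by
    intro l
    induction l with
    | nil => intro w m h; exact absurd trivial h
    | cons e l ih =>
      intro w m h
      by_cases hv : valid Q l w
      · have hs : start Q l w ≠ Q.tgt e := fun hs => h ⟨hs, hv⟩
        cases l with
        | nil =>
          simp only [wact, start] at hs ⊢
          rw [← pv_mul_ga, ← mul_smul, ← mul_assoc, pv_mul_ne k Q _ _ hs, zero_mul, zero_smul]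
        | cons e' l =>
          simp only [wact, start] at hs ⊢
          rw [← mul_smul, ← ga_mul_pv, ← pv_mul_ga k Q e, mul_assoc, ← mul_assoc (pv k Q _),
            pv_mul_ne k Q _ _ hs, zero_mul, mul_zero, zero_smul, wact_zero, smul_zero]
      · exact ih w _ hv
  refine ⟨fun v hv m => ?_, fun m => ?_⟩
  · obtain ⟨n, hn⟩ := key m
    exact hn [] v trivial (Or.inr hv)
  · obtain ⟨n, hn⟩ := key m
    refine ⟨n, fun l hl => ?_⟩
    rw [← one_smul (PathAlg k Q.rev) (wact k Q l m), ← sum_pv, Finset.sum_smul]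
    refine Finset.sum_eq_zero fun w _ => ?_
    by_cases hv : valid Q l w
    · exact hn l w hv (Or.inl hl)
    · exact hinv l w m hv
end Germ
end LPA

namespace LPA
section FD
variable (k : Type) [Field k] (Q : FinQuiver)
variable {M : Type} [AddCommGroup M] [Module (PathAlg k Q.rev) M]

theorem pv_wact (l : List Q.A) (m : M) (hm : ∃ v m', m = pv k Q v • m') (w : Q.V) :
    pv k Q w • wact k Q l m = wact k Q l m ∨ pv k Q w • wact k Q l m = 0 := by
  induction l generalizing m with
  | nil =>
    obtain ⟨v, m', rfl⟩ := hm
    simp only [wact]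
    by_cases h : w = v
    · subst h; left; rw [← mul_smul, pv_mul_self]
    · right; rw [← mul_smul, pv_mul_ne k Q w v h, zero_smul]
  | cons e l ih =>
    simp only [wact]
    exact ih _ ⟨Q.tgt e, ga k Q e • m, by rw [← mul_smul, pv_mul_ga]⟩

theorem smul_mem_of_gens [Module k M] [IsScalarTower k (PathAlg k Q.rev) M] (U : Submodule k M)
    (hv : ∀ v, ∀ x ∈ U, pv k Q v • x ∈ U) (he : ∀ e, ∀ x ∈ U, ga k Q e • x ∈ U)
    (p : PathAlg k Q.rev) : ∀ x ∈ U, p • x ∈ U := by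
  induction p using path_induction with
  | hk c => intro x hx; rw [algebraMap_smul]; exact U.smul_mem c hx
  | hv v => exact hv v
  | he e => exact he e
  | hm a b ha hb => intro x hx; rw [mul_smul]; exact ha _ (hb _ hx)
  | ha a b ha hb => intro x hx; rw [add_smul]; exact U.add_mem (ha _ hx) (hb _ hx)

theorem finite_of_tors [Module k M] [IsScalarTower k (PathAlg k Q.rev) M]
    [Module.Finite (PathAlg k Q.rev) M] (h : Tors k Q M) : Module.Finite k M := by
  obtain ⟨S, hS⟩ := Module.Finite.fg_top (R := PathAlg k Q.rev) (M := M)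
  choose n hn using h.2
  let N := S.sup n
  have hN : ∀ s ∈ S, ∀ l : List Q.A, N ≤ l.length → wact k Q l s = 0 := fun s hs l hl =>
    hn s l ((Finset.le_sup hs).trans hl)
  let W : Set M := (fun x : List Q.A × Q.V × M => wact k Q x.1 (pv k Q x.2.1 • x.2.2)) ''
    ({l : List Q.A | l.length < N + 1} ×ˢ (Set.univ ×ˢ (S : Set M)))
  have hWf : W.Finite :=
    ((List.finite_length_lt Q.A (N + 1)).prod (Set.finite_univ.prod S.finite_toSet)).image _
  have hW : ∀ (l : List Q.A) v, ∀ s ∈ S, wact k Q l (pv k Q v • s) ∈ Submodule.span k W := by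
    intro l v s hs
    by_cases hl : l.length < N + 1
    · exact Submodule.subset_span ⟨(l, v, s), ⟨hl, trivial, hs⟩, rfl⟩
    · have : wact k Q l (pv k Q v • s) = 0 := by
        cases l with
        | nil => simp at hl
        | cons e l =>
          simp only [wact]
          by_cases hv : Q.src e = v
          · rw [← hv, ← mul_smul, ga_mul_pv]
            exact hN s hs (e :: l) (by omega)
          · rw [← mul_smul, ← ga_mul_pv, mul_assoc, pv_mul_ne k Q _ _ hv, mul_zero, zero_smul,
              wact_zero]
      rw [this]; exact zero_mem _
  have hst := smul_mem_of_gens k Q (Submodule.span k W)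
    (fun w x hx => by
      induction hx using Submodule.span_induction with
      | mem x hx =>
        obtain ⟨⟨l, v, s⟩, ⟨_, _, hs⟩, rfl⟩ := hx
        rcases pv_wact k Q l (pv k Q v • s) ⟨v, s, rfl⟩ w with h | h
        · simp only [h]; exact hW l v s hs
        · simp only [h]; exact zero_mem _
      | zero => rw [smul_zero]; exact zero_mem _
      | add x y _ _ hx hy => rw [smul_add]; exact add_mem hx hy
      | smul c x _ hx => rw [smul_algebra_smul_comm]; exact Submodule.smul_mem _ _ hx)
    (fun e x hx => by
      induction hx using Submodule.span_induction with
      | mem x hx =>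
        obtain ⟨⟨l, v, s⟩, ⟨_, _, hs⟩, rfl⟩ := hx
        have := hW (l ++ [e]) v s hs
        rwa [wact_append] at this
      | zero => rw [smul_zero]; exact zero_mem _
      | add x y _ _ hx hy => rw [smul_add]; exact add_mem hx hy
      | smul c x _ hx => rw [smul_algebra_smul_comm]; exact Submodule.smul_mem _ _ hx)
  refine ⟨⟨hWf.toFinset, ?_⟩⟩
  rw [Set.Finite.coe_toFinset, eq_top_iff]
  intro x _
  have hx : x ∈ Submodule.span (PathAlg k Q.rev) (S : Set M) := by rw [hS]; trivial
  induction hx using Submodule.span_induction with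
  | mem x hx =>
    have : x = ∑ v, wact k Q [] (pv k Q v • x) := by
      simp only [wact]; rw [← Finset.sum_smul, sum_pv, one_smul]
    rw [this]
    exact sum_mem fun v _ => hW [] v x hx
  | zero => exact zero_mem _
  | add x y _ _ hx hy => exact add_mem (hx trivial) (hy trivial)
  | smul p x _ hx => exact hst p x (hx trivial)

/-- The generators of `P_k(Ē)`. -/
noncomputable def gen : Q.V ⊕ Q.A → PathAlg k Q.rev := Sum.elim (pv k Q) (ga k Q)

theorem fp_of_finite [Module k M] [IsScalarTower k (PathAlg k Q.rev) M] [Module.Finite k M] :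
    Module.FinitePresentation (PathAlg k Q.rev) M := by
  classical
  let d := Module.finrank k M
  let b : Module.Basis (Fin d) k M := Module.finBasis k M
  let P := PathAlg k Q.rev
  let φ : (Fin d → P) →ₗ[P] M := Fintype.linearCombination P b
  have hφ1 : ∀ i (p : P), φ (Pi.single i p) = p • b i := fun i p => by
    simp [φ, Fintype.linearCombination_apply_single]
  have hφ : Function.Surjective φ := by
    intro m
    refine ⟨fun i => algebraMap k P (b.repr m i), ?_⟩
    simp only [φ, Fintype.linearCombination_apply, algebraMap_smul]
    exact b.sum_repr m
  let rel : (Q.V ⊕ Q.A) × Fin d → (Fin d → P) := fun x =>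
    Pi.single x.2 (gen k Q x.1) - fun l => algebraMap k P (b.repr (gen k Q x.1 • b x.2) l)
  let K' : Submodule P (Fin d → P) := Submodule.span P (Set.range rel)
  let u : (Fin d → k) →ₗ[k] (Fin d → P) :=
    { toFun := fun c l => algebraMap k P (c l)
      map_add' := fun _ _ => by ext; simp
      map_smul' := fun c x => by ext; simp [Algebra.smul_def] }
  have hφu : ∀ c, φ (u c) = ∑ i, c i • b i := fun c => by
    simp [φ, u, Fintype.linearCombination_apply, algebraMap_smul]
  have hK'0 : K' ≤ LinearMap.ker φ := by
    rw [Submodule.span_le]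
    rintro _ ⟨⟨g, i⟩, rfl⟩
    have := hφu (fun l => b.repr (gen k Q g • b i) l)
    rw [SetLike.mem_coe, LinearMap.mem_ker]
    simp only [rel]
    rw [map_sub, hφ1]
    erw [this]
    rw [b.sum_repr, sub_self]
  let U : Submodule k (Fin d → P) := LinearMap.range u ⊔ K'.restrictScalars k
  have hK'U : ∀ x ∈ K', x ∈ U := fun x hx => Submodule.mem_sup_right (by simpa using hx)
  have huU : ∀ c, u c ∈ U := fun c => Submodule.mem_sup_left ⟨c, rfl⟩
  have hsingle : ∀ i, (Pi.single i 1 : Fin d → P) ∈ U := fun i => by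
    have : (Pi.single i 1 : Fin d → P) = u (Pi.single i 1) := by
      ext l
      by_cases h : l = i
      · subst h; simp [u]
      · simp [u, h]
    rw [this]; exact huU _
  have hgen : ∀ g, ∀ x ∈ U, gen k Q g • x ∈ U := by
    intro g x hx
    obtain ⟨y, ⟨c, rfl⟩, z, hz, rfl⟩ := Submodule.mem_sup.mp hx
    rw [smul_add]
    refine add_mem ?_ (hK'U _ (K'.smul_mem _ (by simpa using hz)))
    have h1 : gen k Q g • u c = ∑ i, c i • (Pi.single i (gen k Q g) : Fin d → P) := by
      ext l
      simp [u, Finset.sum_apply, Pi.single_apply, Algebra.smul_def, Algebra.commutes]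
    rw [h1]
    refine sum_mem fun i _ => U.smul_mem _ ?_
    have h2 : (Pi.single i (gen k Q g) : Fin d → P) =
        rel (g, i) + u (fun l => b.repr (gen k Q g • b i) l) := by
      simp only [rel]
      exact (sub_add_cancel _ _).symm
    rw [h2]
    exact add_mem (hK'U _ (Submodule.subset_span ⟨_, rfl⟩)) (huU _)
  have hst := smul_mem_of_gens k Q U (fun v => hgen (Sum.inl v)) (fun e => hgen (Sum.inr e))
  have hUtop : ∀ x, x ∈ U := by
    intro x
    have : x = ∑ i, x i • (Pi.single i 1 : Fin d → P) := by
      ext l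
      simp [Finset.sum_apply, Pi.single_apply]
    rw [this]
    exact sum_mem fun i _ => hst _ _ (hsingle i)
  have hker : LinearMap.ker φ = K' := by
    refine le_antisymm (fun x hx => ?_) hK'0
    obtain ⟨y, ⟨c, rfl⟩, z, hz, rfl⟩ := Submodule.mem_sup.mp (hUtop x)
    have hz' : z ∈ K' := by simpa using hz
    have h0 : φ (u c) = 0 := by
      have : φ (u c + z) = 0 := hx
      rwa [map_add, (hK'0 hz' : φ z = 0), add_zero] at this
    rw [hφu] at h0
    have hc : c = 0 := funext (Fintype.linearIndependent_iff.mp b.linearIndependent c h0)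
    rw [hc, map_zero, zero_add]
    exact hz'
  refine Module.finitePresentation_of_surjective φ hφ ?_
  rw [hker]
  exact Submodule.fg_span (Set.finite_range _)

theorem finiteLength_of_finite [Module k M] [IsScalarTower k (PathAlg k Q.rev) M]
    [Module.Finite k M] : IsFiniteLength (PathAlg k Q.rev) M :=
  isFiniteLength_iff_isNoetherian_isArtinian.mpr ⟨isNoetherian_of_tower k inferInstance,
    isArtinian_of_tower k inferInstance⟩
end FD
end LPA

namespace LPA
section Final
variable (k : Type) [Field k] (Q : FinQuiver)

theorem tower_compHom (M : Type) [AddCommGroup M] [Module (PathAlg k Q.rev) M] :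
    letI : Module k M := Module.compHom M (algebraMap k (PathAlg k Q.rev))
    IsScalarTower k (PathAlg k Q.rev) M := by
  letI : Module k M := Module.compHom M (algebraMap k (PathAlg k Q.rev))
  refine ⟨fun c p m => ?_⟩
  rw [Algebra.smul_def, mul_smul]
  rfl

theorem mclass_iff (X : ModuleOver (PathAlg k Q.rev)) :
    MClass k Q X ↔ FinDimOver k (PathAlg k Q.rev) X ∧ Tors k Q X.carrier := by
  letI : Module k X.carrier := Module.compHom X.carrier (algebraMap k (PathAlg k Q.rev))
  haveI : IsScalarTower k (PathAlg k Q.rev) X.carrier := tower_compHom k Q X.carrier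
  constructor
  · rintro ⟨hfp, hs⟩
    have ht := tors_of_subsingleton k Q X.carrier hs
    exact ⟨finite_of_tors k Q ht, ht⟩
  · rintro ⟨hfd, ht⟩
    haveI : Module.Finite k X.carrier := hfd
    exact ⟨fp_of_finite k Q, subsingleton_of_tors k Q ht⟩

theorem findim_ses {A B C : ModuleOver (PathAlg k Q.rev)} (h : IsSES A B C) :
    FinDimOver k (PathAlg k Q.rev) B ↔
      FinDimOver k (PathAlg k Q.rev) A ∧ FinDimOver k (PathAlg k Q.rev) C := by
  letI : Module k A.carrier := Module.compHom A.carrier (algebraMap k (PathAlg k Q.rev))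
  letI : Module k B.carrier := Module.compHom B.carrier (algebraMap k (PathAlg k Q.rev))
  letI : Module k C.carrier := Module.compHom C.carrier (algebraMap k (PathAlg k Q.rev))
  haveI : IsScalarTower k (PathAlg k Q.rev) A.carrier := tower_compHom k Q A.carrier
  haveI : IsScalarTower k (PathAlg k Q.rev) B.carrier := tower_compHom k Q B.carrier
  haveI : IsScalarTower k (PathAlg k Q.rev) C.carrier := tower_compHom k Q C.carrier
  obtain ⟨f, g, hf, hg, hfg⟩ := h
  change Module.Finite k B.carrier ↔ Module.Finite k A.carrier ∧ Module.Finite k C.carrier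
  constructor
  · intro hB
    exact ⟨Module.Finite.of_injective (f.restrictScalars k) hf,
      Module.Finite.of_surjective (g.restrictScalars k) hg⟩
  · rintro ⟨hA, hC⟩
    have h1 : IsNoetherian k B.carrier :=
      isNoetherian_of_range_eq_ker (f.restrictScalars k) (g.restrictScalars k) (by
        ext x
        exact (SetLike.ext_iff.mp hfg x))
    infer_instance

theorem mclass_ses (A B C : ModuleOver (PathAlg k Q.rev)) (h : IsSES A B C) :
    MClass k Q B ↔ MClass k Q A ∧ MClass k Q C := by
  have h1 := findim_ses k Q h
  obtain ⟨f, g, hf, hg, hfg⟩ := h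
  have h2 := tors_ses k Q f g hf hg hfg
  rw [mclass_iff, mclass_iff, mclass_iff, h1, h2]
  tauto

theorem mclass_fpl (X : ModuleOver (PathAlg k Q.rev)) (h : MClass k Q X) : FplClass k Q X := by
  letI : Module k X.carrier := Module.compHom X.carrier (algebraMap k (PathAlg k Q.rev))
  haveI : IsScalarTower k (PathAlg k Q.rev) X.carrier := tower_compHom k Q X.carrier
  haveI : Module.Finite k X.carrier := ((mclass_iff k Q X).mp h).1
  exact ⟨h.1, finiteLength_of_finite k Q⟩

end Final
end LPA

open LPA in
/-- Let `𝓜` be the category of finitely presented left `P_k(Ē)`-modules `M`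
with `L_k(E) ⊗_{P_k(Ē)} M = 0`.  Then:
(a) every object of `𝓜` is finite-dimensional over `k`;
(b) `𝓜` is a Serre subcategory of the category `fpl(P_k(Ē))` of finitely presented modules
of finite length (in any short exact sequence in `fpl`, the middle term lies in `𝓜` iff the
outer terms do);
(c) the induced map `K₀(𝓜) → K₀(fpl(P_k(Ē)))` is injective, with image the subgroup
generated by the classes of the simple modules belonging to `𝓜`. -/
theorem statement_12 (k : Type) [Field k] (Q : FinQuiver) :
    (∀ X : ModuleOver (PathAlg k Q.rev), MClass k Q X → FinDimOver k (PathAlg k Q.rev) X) ∧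
    (∀ A B C : ModuleOver (PathAlg k Q.rev),
      FplClass k Q A → FplClass k Q B → FplClass k Q C → IsSES A B C →
        (MClass k Q B ↔ MClass k Q A ∧ MClass k Q C)) ∧
    (∃ j : K0 (PathAlg k Q.rev) (MClass k Q) →+ K0 (PathAlg k Q.rev) (FplClass k Q),
      (∀ (X : ModuleOver (PathAlg k Q.rev)) (hX : MClass k Q X) (hX' : FplClass k Q X),
        j (K0.cls hX) = K0.cls hX') ∧
      Function.Injective j ∧
      AddMonoidHom.range j = AddSubgroup.closure
        {x | ∃ (X : ModuleOver (PathAlg k Q.rev)) (hX' : FplClass k Q X),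
          IsSimpleModule (PathAlg k Q.rev) X.carrier ∧ MClass k Q X ∧ x = K0.cls hX'}) := by
  exact ⟨fun X hX => ((mclass_iff k Q X).mp hX).1,
    fun A B C _ _ _ h => mclass_ses k Q A B C h,
    K0_main (MClass k Q) (FplClass k Q) (mclass_fpl k Q) (fun _ h => h.2) (mclass_ses k Q)⟩
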